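/- arXiv:2604.01459 — 2 statements merged into one kernel-verified Lean document; each statement's English description precedes it below -/
import Mathlib

section
/- Let H be a real inner product space, let q : Fin r₁ → H and p : Fin r₂ → H be orthonormal families, and let M be the real r₁ × r₂ matrix with entries M i j = ⟪q i, p j⟫. Suppose M = U * Σ * Vᵀ, where U is a real r₁ × k matrix with orthonormal columns (Uᵀ U = I_k), V is a real r₂ × k matrix with orthonormal columns (Vᵀ V = I_k), and Σ is a real k × k diagonal matrix (a reduced singular value decomposition of M). Then the families u : Fin k → H and w : Fin k → H defined by u i = ∑ a, (U a i) • q a and w j = ∑ b, (V b j) • p b are each orthonormal in H, and their cross-inner products are diagonal: ⟪u i, w j⟫ = Σ i j for all i, j (in particular ⟪u i, w j⟫ = 0 for i ≠ j and ⟪u i, w i⟫ equals the i-th singular value). -/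
open Matrix RealInnerProductSpace

/-! If `G` is the matrix of inner products of two families `q` and `p`, then the families with
coefficient matrices `A` and `B` have cross-inner products `Aᵀ G B` (`inner_combination`).
Orthonormality of `u` and of `w` is the case `G = 1`, with `Uᵀ U = 1` and `Vᵀ V = 1`; the cross
inner products are `Uᵀ M V = (Uᵀ U) Σ (Vᵀ V) = Σ`. -/

theorem inner_combination {H : Type*} [NormedAddCommGroup H] [InnerProductSpace ℝ H]
    {m n k l : ℕ} (q : Fin m → H) (p : Fin n → H)
    (G : Matrix (Fin m) (Fin n) ℝ) (hG : ∀ i j, G i j = ⟪q i, p j⟫)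
    (A : Matrix (Fin m) (Fin k) ℝ) (B : Matrix (Fin n) (Fin l) ℝ) (i : Fin k) (j : Fin l) :
    ⟪∑ a, A a i • q a, ∑ b, B b j • p b⟫ = (Aᵀ * G * B) i j := by
  simp only [sum_inner, inner_sum, real_inner_smul_left, real_inner_smul_right,
    Matrix.mul_apply, Matrix.transpose_apply, hG, Finset.sum_mul]
  exact Finset.sum_congr rfl fun _ _ => Finset.sum_congr rfl fun _ _ => by ring

theorem orthonormal_combination {H : Type*} [NormedAddCommGroup H] [InnerProductSpace ℝ H]
    {m k : ℕ} (q : Fin m → H) (hq : Orthonormal ℝ q)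
    (A : Matrix (Fin m) (Fin k) ℝ) (hA : Aᵀ * A = 1) :
    Orthonormal ℝ (fun i => ∑ a, A a i • q a) := by
  rw [orthonormal_iff_ite]
  intro i j
  rw [inner_combination q q 1
    (fun i j => by rw [orthonormal_iff_ite.mp hq, Matrix.one_apply]) A A i j,
    Matrix.mul_one, hA, Matrix.one_apply]

/-- **Principal vectors from a reduced SVD of the cosine matrix.** If `q` and `p` are
orthonormal families, `M i j = ⟪q i, p j⟫`, and `M = U Σ Vᵀ` is a reduced SVD, then
`u i = ∑ a, U a i • q a` and `w j = ∑ b, V b j • p b` are orthonormal families with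
`⟪u i, w j⟫ = Σ i j`. -/
theorem stmt3 {H : Type*} [NormedAddCommGroup H] [InnerProductSpace ℝ H]
    {r₁ r₂ k : ℕ} (q : Fin r₁ → H) (p : Fin r₂ → H)
    (hq : Orthonormal ℝ q) (hp : Orthonormal ℝ p)
    (M : Matrix (Fin r₁) (Fin r₂) ℝ) (hMdef : ∀ i j, M i j = ⟪q i, p j⟫)
    (U : Matrix (Fin r₁) (Fin k) ℝ) (hU : Uᵀ * U = 1)
    (V : Matrix (Fin r₂) (Fin k) ℝ) (hV : Vᵀ * V = 1)
    (σ : Fin k → ℝ) (Sig : Matrix (Fin k) (Fin k) ℝ) (hSig : Sig = Matrix.diagonal σ)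
    (hSVD : M = U * Sig * Vᵀ)
    (u w : Fin k → H)
    (hu : ∀ i, u i = ∑ a, U a i • q a) (hw : ∀ j, w j = ∑ b, V b j • p b) :
    Orthonormal ℝ u ∧ Orthonormal ℝ w ∧ ∀ i j, ⟪u i, w j⟫ = Sig i j := by
  obtain rfl : u = fun i => ∑ a, U a i • q a := funext hu
  obtain rfl : w = fun j => ∑ b, V b j • p b := funext hw
  refine ⟨orthonormal_combination q hq U hU, orthonormal_combination p hp V hV, fun i j => ?_⟩
  have hM : Uᵀ * M * V = Sig := by
    calc Uᵀ * M * V = (Uᵀ * U) * Sig * (Vᵀ * V) := by rw [hSVD]; simp only [Matrix.mul_assoc]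
      _ = Sig := by rw [hU, hV, Matrix.one_mul, Matrix.mul_one]
  rw [inner_combination q p M hMdef U V i j, hM]
end

section
/- Let H be a real inner product space, let q : Fin r₁ → H and p : Fin r₂ → H be orthonormal families, and let M be the real r₁ × r₂ matrix with entries M i j = ⟪q i, p j⟫. Then the supremum of |⟪x, y⟫| over all x in the span of q and y in the span of p with ‖x‖ = ‖y‖ = 1 equals the operator norm of M viewed as a linear map from Euclidean space ℝ^{r₂} to ℝ^{r₁} (i.e., equals the largest singular value of M). -/
open Matrix RealInnerProductSpace

/-!
An orthonormal family `q` identifies Euclidean space isometrically with `span q` through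
`a ↦ ∑ i, a i • q i`, and under these identifications the pairing of `span q` with `span p` becomes
the bilinear form of the cosine matrix: `⟪∑ i, a i • q i, ∑ j, b j • p j⟫ = ⟪a, M b⟫`
(`inner_combination`). The supremum is therefore that of `|⟪a, M b⟫|` over Euclidean unit vectors.
Cauchy–Schwarz bounds it by the operator norm of `M`, and the bound is approached by taking `a` to
be the normalization of `M b`. If one of the families is empty, or more generally if `M b = 0`, the
lower bound only needs that the supremum is nonnegative (`sSup ∅ = 0`).
-/

theorem norm_combination {H : Type*} [NormedAddCommGroup H] [InnerProductSpace ℝ H]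
    {r : ℕ} {q : Fin r → H} (hq : Orthonormal ℝ q) (a : EuclideanSpace ℝ (Fin r)) :
    ‖∑ i, a i • q i‖ = ‖a‖ := by
  rw [← sq_eq_sq₀ (norm_nonneg _) (norm_nonneg _), ← real_inner_self_eq_norm_sq,
    hq.inner_sum, EuclideanSpace.real_norm_sq_eq]
  simp [sq]

theorem mem_span_iff_combination {H : Type*} [NormedAddCommGroup H] [InnerProductSpace ℝ H]
    {r : ℕ} (q : Fin r → H) (x : H) :
    x ∈ Submodule.span ℝ (Set.range q) ↔ ∃ a : EuclideanSpace ℝ (Fin r), ∑ i, a i • q i = x := by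
  rw [Submodule.mem_span_range_iff_exists_fun]
  exact ⟨fun ⟨c, hc⟩ => ⟨WithLp.toLp 2 c, hc⟩, fun ⟨a, ha⟩ => ⟨fun i => a i, ha⟩⟩

theorem inner_combination_s4 {H : Type*} [NormedAddCommGroup H] [InnerProductSpace ℝ H]
    {r₁ r₂ : ℕ} (q : Fin r₁ → H) (p : Fin r₂ → H)
    (M : Matrix (Fin r₁) (Fin r₂) ℝ) (hMdef : ∀ i j, M i j = ⟪q i, p j⟫)
    (a : EuclideanSpace ℝ (Fin r₁)) (b : EuclideanSpace ℝ (Fin r₂)) :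
    ⟪∑ i, a i • q i, ∑ j, b j • p j⟫ = ⟪a, Matrix.toEuclideanLin M b⟫ := by
  simp only [sum_inner, inner_sum, real_inner_smul_left, real_inner_smul_right, PiLp.inner_apply,
    Matrix.toLpLin_apply, Matrix.mulVec, dotProduct, hMdef, RCLike.inner_apply, conj_trivial,
    Finset.sum_mul]
  rw [Finset.sum_comm]
  exact Finset.sum_congr rfl fun i _ => Finset.sum_congr rfl fun j _ => by ring

/-- **Cosine of the first principal angle.** For orthonormal families `q`, `p` with cosine
matrix `M i j = ⟪q i, p j⟫`, the supremum of `|⟪x, y⟫|` over unit vectors `x ∈ span q` and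
`y ∈ span p` equals the operator norm of `M` as a map between Euclidean spaces. -/
theorem stmt4 {H : Type*} [NormedAddCommGroup H] [InnerProductSpace ℝ H]
    {r₁ r₂ : ℕ} (q : Fin r₁ → H) (p : Fin r₂ → H)
    (hq : Orthonormal ℝ q) (hp : Orthonormal ℝ p)
    (M : Matrix (Fin r₁) (Fin r₂) ℝ) (hMdef : ∀ i j, M i j = ⟪q i, p j⟫) :
    sSup {t : ℝ | ∃ x ∈ Submodule.span ℝ (Set.range q),
            ∃ y ∈ Submodule.span ℝ (Set.range p),
            ‖x‖ = 1 ∧ ‖y‖ = 1 ∧ t = |⟪x, y⟫|}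
      = ‖LinearMap.toContinuousLinearMap (Matrix.toEuclideanLin M)‖ := by
  set T := LinearMap.toContinuousLinearMap (Matrix.toEuclideanLin M) with hT
  have hpair : ∀ a b, ⟪∑ i, a i • q i, ∑ j, b j • p j⟫ = ⟪a, T b⟫ :=
    inner_combination_s4 q p M hMdef
  set S := {t : ℝ | ∃ x ∈ Submodule.span ℝ (Set.range q),
            ∃ y ∈ Submodule.span ℝ (Set.range p),
            ‖x‖ = 1 ∧ ‖y‖ = 1 ∧ t = |⟪x, y⟫|} with hS
  have hle : ∀ t ∈ S, t ≤ ‖T‖ := by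
    rintro t ⟨x, hx, y, hy, hx1, hy1, rfl⟩
    obtain ⟨a, rfl⟩ := (mem_span_iff_combination q x).1 hx
    obtain ⟨b, rfl⟩ := (mem_span_iff_combination p y).1 hy
    rw [norm_combination hq] at hx1
    rw [norm_combination hp] at hy1
    rw [hpair]
    calc |⟪a, T b⟫| ≤ ‖a‖ * ‖T b‖ := abs_real_inner_le_norm _ _
      _ ≤ ‖a‖ * (‖T‖ * ‖b‖) := by gcongr; exact T.le_opNorm b
      _ = ‖T‖ := by rw [hx1, hy1]; ring
  have hS0 : 0 ≤ sSup S := by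
    refine Real.sSup_nonneg ?_
    rintro t ⟨x, -, y, -, -, -, rfl⟩
    exact abs_nonneg _
  refine le_antisymm (Real.sSup_le hle (norm_nonneg _)) ?_
  refine T.opNorm_le_bound hS0 fun b => ?_
  by_cases hTb : T b = 0
  · rw [hTb, norm_zero]
    positivity
  have hb : b ≠ 0 := by
    rintro rfl
    exact hTb (map_zero T)
  have hb' : 0 < ‖b‖ := norm_pos_iff.2 hb
  have hTb' : 0 < ‖T b‖ := norm_pos_iff.2 hTb
  rw [← div_le_iff₀ hb']
  refine le_csSup ⟨‖T‖, hle⟩ ⟨_, (mem_span_iff_combination q _).2 ⟨‖T b‖⁻¹ • T b, rfl⟩,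
    _, (mem_span_iff_combination p _).2 ⟨‖b‖⁻¹ • b, rfl⟩, ?_, ?_, ?_⟩
  · rw [norm_combination hq, norm_smul, norm_inv, norm_norm, inv_mul_cancel₀ hTb'.ne']
  · rw [norm_combination hp, norm_smul, norm_inv, norm_norm, inv_mul_cancel₀ hb'.ne']
  · have hval : ⟪‖T b‖⁻¹ • T b, T (‖b‖⁻¹ • b)⟫ = ‖T b‖ / ‖b‖ := by
      rw [map_smul, real_inner_smul_left, real_inner_smul_right, real_inner_self_eq_norm_sq]
      field_simp
    rw [hpair, hval, abs_of_nonneg (by positivity)]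
end
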